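/- Let L be a finite-dimensional nonabelian mock-Lie algebra of dimension n over a field K of characteristic different from 2 and 3. Then dim U(L) ≤ 3·2^{n−2} < 2^n. Consequently, a finite-dimensional mock-Lie algebra L satisfies dim U(L) = 2^{dim L} (the Poincaré–Birkhoff–Witt equality) if and only if L is abelian. -/

import Mathlib

/-!
The algebra `U(L)` is generated by `L`, and in it `x y + y x = 2 (x ∘ y)`, so modulo products with
fewer factors the generators anticommute and square to zero. Hence, for any finite family `e`
spanning `L`, the increasing products of distinct `e i` span `U(L)`
(`span_orderedProd_eq_top`, resting on the straightening step `mul_orderedProd_mem`).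

If `L` is not abelian, polarization gives `x` with `y = x ∘ x ≠ 0`, while the Jacobi identity gives
`x ∘ y = 0`; so `x` and `y` are linearly independent. In `U(L)` we have `x² = y`, so `x` and `y`
commute, and they also anticommute because `x ∘ y = 0`; therefore `x y = 0`. Taking a spanning
family that starts with `x, y`, every increasing product containing both vanishes, which leaves at
most `2 ^ n - 2 ^ (n - 2) = 3 * 2 ^ (n - 2)` products.

If `L` is abelian, `U(L)` is the exterior algebra of `L`, which has dimension `2 ^ n`.
-/

variable (K : Type*) [Field K] {L : Type*} [AddCommGroup L] [Module K L]

/-- The defining relations of the universal enveloping algebra of a mock-Lie algebra. -/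
inductive URel (mul : L →ₗ[K] L →ₗ[K] L) :
    TensorAlgebra K L → TensorAlgebra K L → Prop
  | mk (x y : L) : URel mul
      ((1 / 2 : K) • (TensorAlgebra.ι K x * TensorAlgebra.ι K y +
        TensorAlgebra.ι K y * TensorAlgebra.ι K x))
      (TensorAlgebra.ι K (mul x y))

/-- The universal enveloping algebra `U(L)`: the quotient of the tensor algebra `T(L)`
by the two-sided ideal generated by the elements `(1/2)(x ⊗ y + y ⊗ x) - x ∘ y`. -/
abbrev UEnv (mul : L →ₗ[K] L →ₗ[K] L) : Type _ := RingQuot (URel K mul)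

namespace MockLie

section Straightening

variable {F A : Type*} [Field F] [Ring A] [Algebra F A] {n : ℕ}

/-- The product of the `e i` for `i ∈ s`, with indices in increasing order. -/
noncomputable def orderedProd (e : Fin n → A) (s : Finset (Fin n)) : A :=
  ((s.sort (· ≤ ·)).map e).prod

lemma orderedProd_empty (e : Fin n → A) : orderedProd e ∅ = 1 := by
  simp [orderedProd]

lemma orderedProd_insert (e : Fin n → A) {i : Fin n} {s : Finset (Fin n)}
    (h : ∀ j ∈ s, i < j) : orderedProd e (insert i s) = e i * orderedProd e s := by
  unfold orderedProd
  rw [Finset.sort_insert _ (fun b hb => (h b hb).le) (fun hi => lt_irrefl _ (h i hi))]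
  simp

variable (F) in
/-- The span of the increasing products with at most `d` factors. -/
noncomputable def filt (e : Fin n → A) (d : ℕ) : Submodule F A :=
  Submodule.span F (orderedProd e '' {s | s.card ≤ d})

lemma filt_mono (e : Fin n → A) {d d' : ℕ} (h : d ≤ d') : filt F e d ≤ filt F e d' :=
  Submodule.span_mono (Set.image_mono fun _ hs => le_trans hs h)

lemma orderedProd_mem_filt (e : Fin n → A) {s : Finset (Fin n)} {d : ℕ} (h : s.card ≤ d) :
    orderedProd e s ∈ filt F e d :=
  Submodule.subset_span ⟨s, h, rfl⟩

lemma mul_mem_of_mem_span {S T : Set A} {P : Submodule F A}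
    (h : ∀ a ∈ S, ∀ b ∈ T, a * b ∈ P) {a b : A}
    (ha : a ∈ Submodule.span F S) (hb : b ∈ Submodule.span F T) : a * b ∈ P := by
  have : Submodule.span F S * Submodule.span F T ≤ P := by
    rw [Submodule.span_mul_span, Submodule.span_le]
    rintro _ ⟨a, ha, b, hb, rfl⟩
    exact h a ha b hb
  exact this (Submodule.mul_mem_mul ha hb)

/-- Straightening: up to increasing products with no more factors than `s`, multiplying the
product over `s` by `e j` gives a multiple of the product over `insert j s`. Keeping track of this
leading term is what makes the induction on the number of factors go through. -/
lemma mul_orderedProd_mem (e : Fin n → A)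
    (he : ∀ i j, e i * e j + e j * e i ∈ Submodule.span F (Set.range e))
    (hsq : ∀ i, e i * e i ∈ Submodule.span F (Set.range e)) (d : ℕ) :
    ∀ (s : Finset (Fin n)) (j : Fin n), s.card = d →
      ∃ c : F, e j * orderedProd e s - c • orderedProd e (insert j s) ∈ filt F e d := by
  induction d using Nat.strong_induction_on with
  | _ d ih =>
  intro s j hs
  have step : ∀ d' < d, ∀ u ∈ Submodule.span F (Set.range e), ∀ v ∈ filt F e d',
      u * v ∈ filt F e (d' + 1) := by
    intro d' hd' u hu v hv
    refine mul_mem_of_mem_span ?_ hu hv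
    rintro _ ⟨k, rfl⟩ _ ⟨t, ht, rfl⟩
    have ht : t.card ≤ d' := ht
    obtain ⟨c, hc⟩ := ih t.card (by omega) t k rfl
    have h1 : orderedProd e (insert k t) ∈ filt F e (d' + 1) :=
      orderedProd_mem_filt e ((Finset.card_insert_le k t).trans (by omega))
    have := add_mem (filt_mono e (by omega) hc) (Submodule.smul_mem _ c h1)
    simpa using this
  rcases s.eq_empty_or_nonempty with rfl | hne
  · refine ⟨1, ?_⟩
    rw [orderedProd_insert e (by simp)]
    simp
  · obtain ⟨i, s', hi, rfl⟩ : ∃ i s', (∀ k ∈ s', i < k) ∧ insert i s' = s :=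
      ⟨s.min' hne, s.erase (s.min' hne), fun k hk => s.min'_lt_of_mem_erase_min' hne hk,
        Finset.insert_erase (s.min'_mem hne)⟩
    have hi' : i ∉ s' := fun h => lt_irrefl _ (hi i h)
    rw [Finset.card_insert_of_notMem hi'] at hs
    have hs' : orderedProd e s' ∈ filt F e s'.card := orderedProd_mem_filt e le_rfl
    rcases lt_trichotomy j i with hji | rfl | hij
    · refine ⟨1, ?_⟩
      rw [orderedProd_insert e (i := j)]
      · simp
      · intro k hk
        rcases Finset.mem_insert.1 hk with rfl | hk
        · exact hji
        · exact hji.trans (hi k hk)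
    · refine ⟨0, ?_⟩
      rw [orderedProd_insert e hi, ← mul_assoc, zero_smul, sub_zero, ← hs]
      exact step _ (by omega) _ (hsq j) _ hs'
    · obtain ⟨c, hc⟩ := ih s'.card (by omega) s' j rfl
      refine ⟨-c, ?_⟩
      have h1 := step _ (by omega) _ (he i j) _ hs'
      have h2 := step _ (by omega) _ (Submodule.subset_span ⟨i, rfl⟩) _ hc
      have h3 : orderedProd e (insert j (insert i s')) = e i * orderedProd e (insert j s') := by
        rw [Finset.insert_comm]
        refine orderedProd_insert e fun k hk => ?_
        rcases Finset.mem_insert.1 hk with rfl | hk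
        · exact hij
        · exact hi k hk
      rw [hs] at h1 h2
      rw [h3, orderedProd_insert e hi]
      convert sub_mem h1 h2 using 1
      simp only [mul_sub, add_mul, mul_assoc, mul_smul_comm, neg_smul]
      abel

lemma mul_mem_span_orderedProd (e : Fin n → A)
    (he : ∀ i j, e i * e j + e j * e i ∈ Submodule.span F (Set.range e))
    (hsq : ∀ i, e i * e i ∈ Submodule.span F (Set.range e)) {u v : A}
    (hu : u ∈ Submodule.span F (Set.range e))
    (hv : v ∈ Submodule.span F (Set.range (orderedProd e))) :
    u * v ∈ Submodule.span F (Set.range (orderedProd e)) := by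
  refine mul_mem_of_mem_span ?_ hu hv
  rintro _ ⟨j, rfl⟩ _ ⟨s, rfl⟩
  obtain ⟨c, hc⟩ := mul_orderedProd_mem e he hsq _ s j rfl
  have h1 : filt F e s.card ≤ Submodule.span F (Set.range (orderedProd e)) :=
    Submodule.span_mono (Set.image_subset_range _ _)
  have := add_mem (h1 hc) (Submodule.smul_mem _ c (Submodule.subset_span ⟨insert j s, rfl⟩))
  simpa using this

end Straightening

section Enveloping

variable {F V : Type*} [Field F] [AddCommGroup V] [Module F V] (mul : V →ₗ[F] V →ₗ[F] V)

/-- The canonical map `L → U(L)`. -/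
noncomputable def toU : V →ₗ[F] UEnv F mul :=
  (RingQuot.mkAlgHom F (URel F mul)).toLinearMap ∘ₗ TensorAlgebra.ι F

lemma toU_mul_add (h2 : (2 : F) ≠ 0) (x y : V) :
    toU mul x * toU mul y + toU mul y * toU mul x = (2 : F) • toU mul (mul x y) := by
  have := RingQuot.mkAlgHom_rel F (URel.mk (mul := mul) x y)
  simp only [map_smul, map_add, map_mul] at this
  change (1 / 2 : F) • (toU mul x * toU mul y + toU mul y * toU mul x) = toU mul (mul x y) at this
  rw [← this, smul_smul, mul_one_div_cancel h2, one_smul]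

lemma toU_sq (h2 : (2 : F) ≠ 0) (x : V) : toU mul x * toU mul x = toU mul (mul x x) := by
  have := toU_mul_add mul h2 x x
  rw [← two_smul F] at this
  exact smul_right_injective _ h2 this

/-- The spanning half of a Poincaré–Birkhoff–Witt theorem for `U(L)`. -/
lemma span_orderedProd_eq_top (h2 : (2 : F) ≠ 0) {n : ℕ} (e : Fin n → V)
    (htop : Submodule.span F (Set.range e) = ⊤) :
    Submodule.span F (Set.range (orderedProd (toU mul ∘ e))) = ⊤ := by
  have hmem (v : V) : toU mul v ∈ Submodule.span F (Set.range (toU mul ∘ e)) := by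
    rw [Set.range_comp, Submodule.span_image, htop]
    exact ⟨v, trivial, rfl⟩
  have he (i j) : (toU mul ∘ e) i * (toU mul ∘ e) j + (toU mul ∘ e) j * (toU mul ∘ e) i ∈
      Submodule.span F (Set.range (toU mul ∘ e)) := by
    simp only [Function.comp_apply, toU_mul_add mul h2]
    exact Submodule.smul_mem _ _ (hmem _)
  have hsq (i) : (toU mul ∘ e) i * (toU mul ∘ e) i ∈
      Submodule.span F (Set.range (toU mul ∘ e)) := by
    simp only [Function.comp_apply, toU_sq mul h2]
    exact hmem _
  have key : ∀ t : TensorAlgebra F V,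
      ∀ m ∈ Submodule.span F (Set.range (orderedProd (toU mul ∘ e))),
      RingQuot.mkAlgHom F (URel F mul) t * m ∈
        Submodule.span F (Set.range (orderedProd (toU mul ∘ e))) := by
    intro t
    induction t using TensorAlgebra.induction with
    | algebraMap r =>
      intro m hm
      rw [AlgHom.commutes, ← Algebra.smul_def]
      exact Submodule.smul_mem _ _ hm
    | ι x =>
      intro m hm
      exact mul_mem_span_orderedProd _ he hsq (hmem x) hm
    | mul a b ha hb =>
      intro m hm
      rw [map_mul, mul_assoc]
      exact ha _ (hb _ hm)
    | add a b ha hb =>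
      intro m hm
      rw [map_add, add_mul]
      exact add_mem (ha _ hm) (hb _ hm)
  rw [eq_top_iff]
  intro u _
  obtain ⟨t, rfl⟩ := RingQuot.mkAlgHom_surjective F (URel F mul) u
  simpa using key t 1 (Submodule.subset_span ⟨∅, orderedProd_empty _⟩)

/-- A mock-Lie algebra over a field of characteristic not `2` or `3` which is not abelian has an
element `x` with `x ∘ x ≠ 0`; then `x ∘ (x ∘ x) = 0` by the Jacobi identity, whence `x` and `x ∘ x`
are linearly independent. -/
lemma exists_square (h2 : (2 : F) ≠ 0) (h3 : (3 : F) ≠ 0)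
    (comm : ∀ x y : V, mul x y = mul y x)
    (jacobi : ∀ x y z : V, mul (mul x y) z + mul (mul z x) y + mul (mul y z) x = 0)
    (hna : ¬ ∀ x y : V, mul x y = 0) :
    ∃ x, mul x (mul x x) = 0 ∧ LinearIndependent F ![x, mul x x] := by
  have hcube (x : V) : mul x (mul x x) = 0 := by
    have h := jacobi x x x
    have h' : (3 : F) • mul (mul x x) x = 0 := by rw [← h]; module
    rw [comm]
    exact (smul_eq_zero.1 h').resolve_left h3
  obtain ⟨x, hx⟩ : ∃ x, mul x x ≠ 0 := by
    by_contra! h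
    refine hna fun x y => ?_
    have h1 := h (x + y)
    simp only [map_add, LinearMap.add_apply, h, comm y x, zero_add, add_zero] at h1
    rw [← two_smul F] at h1
    exact (smul_eq_zero.1 h1).resolve_left h2
  refine ⟨x, hcube x, LinearIndependent.pair_iff.2 fun a b hab => ?_⟩
  have ha : a = 0 := by
    have h := congrArg (mul x) hab
    simp only [map_add, map_smul, hcube, smul_zero, add_zero, map_zero] at h
    exact (smul_eq_zero.1 h).resolve_right hx
  subst ha
  rw [zero_smul, zero_add] at hab
  exact ⟨rfl, (smul_eq_zero.1 hab).resolve_right hx⟩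

lemma exists_spanning_family [FiniteDimensional F V] {x y : V}
    (hxy : LinearIndependent F ![x, y]) :
    ∃ m, Module.finrank F V = m + 2 ∧ ∃ e : Fin (m + 2) → V,
      e 0 = x ∧ e 1 = y ∧ Submodule.span F (Set.range e) = ⊤ := by
  obtain ⟨W, hW⟩ := Submodule.exists_isCompl (Submodule.span F (Set.range ![x, y]))
  have h1 := Submodule.finrank_add_eq_of_isCompl hW
  rw [finrank_span_eq_card hxy, Fintype.card_fin] at h1
  have hr : Submodule.span F (Set.range fun i => (Module.finBasis F W i : V)) = W := by
    have := Set.range_comp (W.subtype) (Module.finBasis F W)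
    change Submodule.span F (Set.range (W.subtype ∘ Module.finBasis F W)) = W
    rw [this, Submodule.span_image, (Module.finBasis F W).span_eq, Submodule.map_top,
      Submodule.range_subtype]
  refine ⟨Module.finrank F W, by omega,
    Fin.cons x (Fin.cons y fun i => (Module.finBasis F W i : V)), rfl, rfl, ?_⟩
  have hins (S : Set V) : insert x (insert y S) = Set.range ![x, y] ∪ S := by
    ext v
    simp [or_assoc, or_left_comm]
  rw [Fin.range_cons, Fin.range_cons, hins, Submodule.span_union, hr, hW.sup_eq_top]

lemma finrank_le [FiniteDimensional F V] (h2 : (2 : F) ≠ 0) {m : ℕ} (e : Fin (m + 2) → V)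
    (htop : Submodule.span F (Set.range e) = ⊤)
    (h01 : toU mul (e 0) * toU mul (e 1) = 0) :
    Module.finrank F (UEnv F mul) ≤ 3 * 2 ^ m := by
  classical
  let P : Finset (Finset (Fin (m + 2))) := Finset.Icc {0, 1} Finset.univ
  have hcard : P.card = 2 ^ m := by
    rw [Finset.card_Icc_finset (Finset.subset_univ _)]
    simp
  have hzero : ∀ s ∈ P, orderedProd (toU mul ∘ e) s = 0 := by
    intro s hs
    have hs : ({0, 1} : Finset (Fin (m + 2))) ⊆ s := (Finset.mem_Icc.1 hs).1
    have hdec : s = insert 0 (insert 1 (s \ {0, 1})) := by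
      ext k
      have h0 := @hs 0
      have h1 := @hs 1
      simp at h0 h1
      by_cases hk0 : k = 0 <;> by_cases hk1 : k = 1 <;> simp_all
    have hgt : ∀ k ∈ s \ {0, 1}, (1 : Fin (m + 2)) < k := by
      intro k hk
      simp only [Finset.mem_sdiff, Finset.mem_insert, Finset.mem_singleton, not_or,
        Fin.ext_iff, Fin.val_zero, Fin.val_one] at hk
      rw [Fin.lt_def, Fin.val_one]
      omega
    rw [hdec, orderedProd_insert, orderedProd_insert _ hgt, ← mul_assoc]
    · simp [h01]
    · intro k hk
      rcases Finset.mem_insert.1 hk with rfl | hk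
      · exact Fin.zero_lt_one
      · exact Fin.zero_lt_one.trans (hgt k hk)
  have hspan : Submodule.span F
      ((Pᶜ.image (orderedProd (toU mul ∘ e)) : Finset (UEnv F mul)) : Set (UEnv F mul)) = ⊤ := by
    rw [eq_top_iff, ← span_orderedProd_eq_top mul h2 e htop, Submodule.span_le]
    rintro _ ⟨s, rfl⟩
    by_cases hs : s ∈ P
    · rw [hzero s hs]
      exact zero_mem _
    · exact Submodule.subset_span
        (Finset.mem_coe.2 (Finset.mem_image_of_mem _ (Finset.mem_compl.2 hs)))
  have h := finrank_span_finset_le_card (R := F) (Pᶜ.image (orderedProd (toU mul ∘ e)))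
  rw [Set.finrank, hspan, finrank_top] at h
  refine h.trans (Finset.card_image_le.trans ?_)
  rw [Finset.card_compl, hcard, Fintype.card_finset, Fintype.card_fin, pow_add]
  omega

/-- The enveloping algebra of an abelian mock-Lie algebra is the exterior algebra. -/
noncomputable def equivExterior (h2 : (2 : F) ≠ 0) (hab : ∀ x y : V, mul x y = 0) :
    UEnv F mul ≃ₐ[F] ExteriorAlgebra F V :=
  AlgEquiv.ofAlgHom
    (RingQuot.liftAlgHom F ⟨TensorAlgebra.lift F (ExteriorAlgebra.ι F), by
      rintro _ _ ⟨x, y⟩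
      simp [hab, ExteriorAlgebra.ι_add_mul_swap, -smul_add]⟩)
    (ExteriorAlgebra.lift F ⟨toU mul, fun x => by rw [toU_sq mul h2, hab, map_zero]⟩)
    (by
      ext x
      simp [toU])
    (by
      ext x
      simp [toU])

end Enveloping

end MockLie

/-- a finite-dimensional nonabelian mock-Lie algebra `L` of dimension
`n` over a field of characteristic `≠ 2, 3` satisfies
`dim U(L) ≤ 3·2^(n-2) < 2^n`; consequently `dim U(L) = 2^(dim L)` (the PBW equality)
holds iff `L` is abelian. -/
theorem uenv_dim_of_nonabelian (h2 : (2 : K) ≠ 0) (h3 : (3 : K) ≠ 0)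
    [FiniteDimensional K L]
    (mul : L →ₗ[K] L →ₗ[K] L)
    (comm : ∀ x y : L, mul x y = mul y x)
    (jacobi : ∀ x y z : L, mul (mul x y) z + mul (mul z x) y + mul (mul y z) x = 0) :
    ((¬ ∀ x y : L, mul x y = 0) →
      Module.finrank K (UEnv K mul) ≤ 3 * 2 ^ (Module.finrank K L - 2) ∧
        3 * 2 ^ (Module.finrank K L - 2) < 2 ^ Module.finrank K L) ∧
    (Module.finrank K (UEnv K mul) = 2 ^ Module.finrank K L ↔ ∀ x y : L, mul x y = 0) := by
  have main : (¬ ∀ x y : L, mul x y = 0) →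
      Module.finrank K (UEnv K mul) ≤ 3 * 2 ^ (Module.finrank K L - 2) ∧
        3 * 2 ^ (Module.finrank K L - 2) < 2 ^ Module.finrank K L := by
    intro hna
    obtain ⟨x, hx, hli⟩ := MockLie.exists_square mul h2 h3 comm jacobi hna
    obtain ⟨m, hm, e, he0, he1, htop⟩ := MockLie.exists_spanning_family hli
    rw [hm, Nat.add_sub_cancel]
    refine ⟨MockLie.finrank_le mul h2 e htop ?_, ?_⟩
    · -- `x` and `x ∘ x = x²` commute in `U(L)`, and they anticommute since `x ∘ (x ∘ x) = 0`.
      have h := MockLie.toU_mul_add mul h2 x (mul x x)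
      rw [hx, map_zero, smul_zero, ← MockLie.toU_sq mul h2, mul_assoc, ← two_smul K] at h
      rw [he0, he1, ← MockLie.toU_sq mul h2]
      exact (smul_eq_zero.1 h).resolve_left h2
    · have := Nat.two_pow_pos m
      rw [pow_add]
      omega
  refine ⟨main, fun h => ?_, fun hab => ?_⟩
  · by_contra hna
    have := main hna
    omega
  · rw [(MockLie.equivExterior mul h2 hab).toLinearEquiv.finrank_eq,
      Module.finrank_eq_card_basis (Module.finBasis K L).ExteriorAlgebra]
    simp
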